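/- For every n ≥ 1, the complex symplectic group Sp_{2n}(ℂ) := {M ∈ GL_{2n}(ℂ) : Mᵀ J M = J}, where J is the standard symplectic form matrix (J = [[0, I_n],[−I_n, 0]] in block form), is acceptable: for every finite group Γ and homomorphisms φ, φ' : Γ → Sp_{2n}(ℂ) that are pointwise conjugate in Sp_{2n}(ℂ), there exists g ∈ Sp_{2n}(ℂ) conjugating φ to φ'. -/

import Mathlib

open Matrix

noncomputable section

/-- The standard symplectic form matrix `J = [[0, I_n], [−I_n, 0]]` in block form,
indexed by `Fin n ⊕ Fin n`. -/
def Jmat (n : ℕ) : Matrix (Fin n ⊕ Fin n) (Fin n ⊕ Fin n) ℂ :=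
  Matrix.fromBlocks 0 1 (-1) 0

/-- Membership in `Sp_{2n}(ℂ) = {M ∈ GL_{2n}(ℂ) : Mᵀ J M = J}`. -/
def memSp (n : ℕ) (g : Matrix (Fin n ⊕ Fin n) (Fin n ⊕ Fin n) ℂ) : Prop :=
  gᵀ * Jmat n * g = Jmat n

/-!
Characters determine representations of a finite group in characteristic zero, so pointwise
conjugate `φ` and `φ'` are intertwined by some invertible matrix `a`, possibly not symplectic. Let
`star` be the adjoint for the form `J`, so that the isometries of `J` are the elements with
`star g * g = 1`. As `φ` and `φ'` take isometries as values, `star a * a` commutes with `φ`. Over an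
algebraically closed field it has a square root `r` that is a polynomial in it, so `r` is
self-adjoint and commutes with `φ` too. The unitary factor `a * r⁻¹` of this polar decomposition is
then an isometry intertwining `φ` with `φ'`.
-/

section SquareRoots

open Polynomial

variable {K : Type*} [Field K] [IsAlgClosed K]

theorem isSquare_of_isReduced {R : Type*} [CommRing R] [Algebra K R] [Module.Finite K R]
    [IsReduced R] (x : R) : IsSquare x := by
  have : IsArtinianRing R := IsArtinianRing.of_finite K R
  let e := IsArtinianRing.equivPi R
  have hfactor (I : MaximalSpectrum R) : IsSquare (e x I) := by
    obtain ⟨c, hc⟩ := (IsAlgClosed.algebraMap_bijective_of_isIntegral (k := K)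
      (K := R ⧸ I.asIdeal)).2 (e x I)
    obtain ⟨d, rfl⟩ := IsAlgClosed.exists_eq_mul_self c
    exact ⟨algebraMap K _ d, by rw [← hc, map_mul]⟩
  choose r hr using hfactor
  exact ⟨e.symm r, e.injective <| by rw [map_mul, e.apply_symm_apply]; exact funext hr⟩

variable [NeZero (2 : K)]

theorem isSquare_of_isUnit {R : Type*} [CommRing R] [Algebra K R] [Module.Finite K R] {s : R}
    (hs : IsUnit s) : IsSquare s := by
  have : IsReduced (R ⧸ nilradical R) :=
    (Ideal.isRadical_iff_quotient_reduced _).1 (Ideal.radical_isRadical _)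
  obtain ⟨r, hr⟩ := isSquare_of_isReduced (K := K) (Ideal.Quotient.mk (nilradical R) s)
  obtain ⟨x, rfl⟩ := Ideal.Quotient.mk_surjective r
  have hnil : IsNilpotent (x * x - s) := by
    rwa [← map_mul, eq_comm, Ideal.Quotient.eq, mem_nilradical] at hr
  have hx : IsUnit x := by
    refine isUnit_of_mul_isUnit_left (y := x) ?_
    rw [← sub_add_cancel (x * x) s]
    exact hnil.isUnit_add_right_of_commute hs (Commute.all _ _)
  have h2 : IsUnit (2 : R) := by
    simpa only [map_ofNat] using (NeZero.ne (2 : K)).isUnit.map (algebraMap K R)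
  -- Newton's method lifts the square root from the reduced quotient.
  obtain ⟨y, ⟨-, hy⟩, -⟩ := existsUnique_nilpotent_sub_and_aeval_eq_zero
    (P := (X ^ 2 - C s : R[X])) (x := x) (by simpa [sq] using hnil) (by
      simpa [one_add_one_eq_two] using h2.mul hx)
  exact ⟨y, by simpa [sub_eq_zero, sq, eq_comm] using hy⟩

open scoped IsMulCommutative in
theorem exists_mem_adjoin_mul_self_eq {A : Type*} [Ring A] [Algebra K A] [Module.Finite K A]
    {s : A} (hs : IsUnit s) : ∃ r ∈ Algebra.adjoin K {s}, r * r = s := by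
  let t : Algebra.adjoin K {s} := ⟨s, Algebra.self_mem_adjoin_singleton K s⟩
  have ht : IsUnit t := by
    refine IsArtinianRing.isUnit_of_nonZeroDivisor_of_isIntegral' (R := K) ?_
    exact comap_nonZeroDivisors_le_of_injective (f := (Algebra.adjoin K {s}).subtype)
      Subtype.val_injective hs.mem_nonZeroDivisors
  obtain ⟨r, hr⟩ := isSquare_of_isUnit (K := K) ht
  exact ⟨r, r.2, congrArg Subtype.val hr.symm⟩

end SquareRoots

section Unitary

variable {K A : Type*}

theorem isSelfAdjoint_of_mem_adjoin_singleton [CommSemiring K] [Semiring A] [StarRing A]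
    [Algebra K A] (hstar : ∀ c : K, IsSelfAdjoint (algebraMap K A c)) {s r : A}
    (hs : IsSelfAdjoint s) (hr : r ∈ Algebra.adjoin K {s}) : IsSelfAdjoint r := by
  induction hr using Algebra.adjoin_induction with
  | mem x hx => rwa [Set.mem_singleton_iff.1 hx]
  | algebraMap c => exact hstar c
  | add x y _ _ hx hy => exact hx.add hy
  | mul x y hxs hys hx hy =>
    refine (hx.commute_iff hy).1 ?_
    exact Algebra.commute_of_mem_adjoin_singleton_of_commute hys
      (Algebra.commute_of_mem_adjoin_self hxs).symm

theorem commute_star_mul_self_of_semiconjBy {M : Type*} [Monoid M] [StarMul M] {a x y : M}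
    (hx : x ∈ unitary M) (hy : y ∈ unitary M) (h : SemiconjBy a x y) :
    Commute (star a * a) x := by
  have hstar : SemiconjBy (star a) y x :=
    calc star a * y = x * star (a * x) * y := by
          rw [star_mul, ← mul_assoc, Unitary.mul_star_self_of_mem hx, one_mul]
      _ = x * star a := by
          rw [h.eq, star_mul, mul_assoc, mul_assoc, Unitary.star_mul_self_of_mem hy, mul_one]
  exact hstar.mul_left h

variable [Field K] [IsAlgClosed K] [NeZero (2 : K)] [Ring A] [StarRing A] [Algebra K A]
  [Module.Finite K A]

theorem exists_unitary_mul_mem_adjoin_star_mul_self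
    (hstar : ∀ c : K, IsSelfAdjoint (algebraMap K A c)) {a : A} (ha : IsUnit a) :
    ∃ u ∈ unitary A, ∃ r ∈ Algebra.adjoin K {star a * a}, IsUnit r ∧ a = u * r := by
  obtain ⟨r, hr, hrr⟩ := exists_mem_adjoin_mul_self_eq (K := K) (ha.star.mul ha)
  have hr_star : star r = r :=
    isSelfAdjoint_of_mem_adjoin_singleton hstar (.star_mul_self a) hr
  obtain ⟨r, rfl⟩ : IsUnit r := isUnit_mul_self_iff.1 (hrr ▸ ha.star.mul ha)
  have hr_inv_star : star (↑r⁻¹ : A) = ↑r⁻¹ := by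
    rw [← Units.coe_star, star_inv, show star r = r from Units.ext hr_star]
  have hu : star (a * ↑r⁻¹) * (a * ↑r⁻¹) = 1 :=
    calc star (a * ↑r⁻¹) * (a * ↑r⁻¹) = ↑r⁻¹ * (star a * a) * ↑r⁻¹ := by
          simp only [star_mul, hr_inv_star, mul_assoc]
      _ = 1 := by simp only [← hrr, Units.inv_mul_cancel_left, Units.mul_inv]
  exact ⟨a * ↑r⁻¹, (ha.mul r⁻¹.isUnit).mem_unitary_of_star_mul_self hu, r, hr, r.isUnit,
    (Units.inv_mul_cancel_right a r).symm⟩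

theorem exists_unitary_semiconjBy
    (hstar : ∀ c : K, IsSelfAdjoint (algebraMap K A c)) {a : A} (ha : IsUnit a) :
    ∃ u ∈ unitary A, ∀ x ∈ unitary A, ∀ y ∈ unitary A, SemiconjBy a x y → SemiconjBy u x y := by
  obtain ⟨u, hu, r, hr, hr_unit, rfl⟩ := exists_unitary_mul_mem_adjoin_star_mul_self hstar ha
  refine ⟨u, hu, fun x hx y hy h ↦ ?_⟩
  have hrx : Commute x r := Algebra.commute_of_mem_adjoin_singleton_of_commute hr
    (commute_star_mul_self_of_semiconjBy hx hy h).symm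
  refine hr_unit.mul_left_inj.1 ?_
  rw [mul_assoc, hrx.eq, ← mul_assoc, h.eq, mul_assoc]

end Unitary

section Representations

open Module Representation

section Equivalences

variable {k G U V W X : Type*} [CommRing k] [Monoid G]
  [AddCommGroup U] [Module k U] [AddCommGroup V] [Module k V]
  [AddCommGroup W] [Module k W] [AddCommGroup X] [Module k X]

/-- The product of two equivalences of representations. -/
def repEquivProdCongr {ρ : Representation k G U} {ρ' : Representation k G V}
    {σ : Representation k G W} {σ' : Representation k G X} (e : ρ.Equiv ρ') (e' : σ.Equiv σ') :
    (ρ.prod σ).Equiv (ρ'.prod σ') :=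
  .mk (e.toLinearEquiv.prodCongr e'.toLinearEquiv) fun g ↦ LinearMap.ext fun v ↦
    Prod.ext (e.toIntertwiningMap.isIntertwining _ _ g v.1)
      (e'.toIntertwiningMap.isIntertwining _ _ g v.2)

/-- A representation is the direct sum of any two complementary subrepresentations. -/
def repProdEquivOfIsCompl {ρ : Representation k G V} {S T : Subrepresentation ρ}
    (h : IsCompl S.toSubmodule T.toSubmodule) :
    (S.toRepresentation.prod T.toRepresentation).Equiv ρ :=
  .mk (Submodule.prodEquivOfIsCompl _ _ h) fun g ↦ LinearMap.ext fun v ↦ by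
    simp [Subrepresentation.toRepresentation, Representation.prod]

/-- An intertwining map identifies any complement of its kernel with its range. -/
def repEquivRangeOfIsCompl {ρ : Representation k G V} {σ : Representation k G W}
    (f : IntertwiningMap ρ σ) {S : Subrepresentation ρ}
    (h : IsCompl f.ker.toSubmodule S.toSubmodule) :
    S.toRepresentation.Equiv f.range.toRepresentation :=
  .mk (f.toLinearMap.kerComplementEquivRange h.symm) fun g ↦ LinearMap.ext fun v ↦
    Subtype.ext (f.isIntertwining _ _ g v)

end Equivalences

section Semisimple

variable {k G V W : Type*} [Field k] [Monoid G] [AddCommGroup V] [Module k V]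
  [AddCommGroup W] [Module k W]

theorem exists_isCompl_toSubmodule (ρ : Representation k G V) [IsSemisimpleRepresentation ρ]
    (S : Subrepresentation ρ) :
    ∃ T : Subrepresentation ρ, IsCompl S.toSubmodule T.toSubmodule := by
  obtain ⟨T, hT⟩ := exists_isCompl S
  refine ⟨T, ?_, ?_⟩
  · rw [disjoint_iff, ← Subrepresentation.toSubmodule_inf, hT.inf_eq_bot]; rfl
  · rw [codisjoint_iff, ← Subrepresentation.toSubmodule_sup, hT.sup_eq_top]; rfl

theorem nonempty_equiv_ker_prod_range {ρ : Representation k G V} [IsSemisimpleRepresentation ρ]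
    {σ : Representation k G W} (f : IntertwiningMap ρ σ) :
    Nonempty (ρ.Equiv (f.ker.toRepresentation.prod f.range.toRepresentation)) := by
  obtain ⟨S, hS⟩ := exists_isCompl_toSubmodule ρ f.ker
  exact ⟨(repProdEquivOfIsCompl hS).symm.trans
    (repEquivProdCongr (.refl _) (repEquivRangeOfIsCompl f hS))⟩

end Semisimple

section Characters

variable {k G V W : Type*} [Field k] [AddCommGroup V] [Module k V] [FiniteDimensional k V]
  [AddCommGroup W] [Module k W] [FiniteDimensional k W]

theorem character_prod [Monoid G] (ρ : Representation k G V) (σ : Representation k G W) :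
    (ρ.prod σ).character = ρ.character + σ.character :=
  funext fun g ↦ LinearMap.trace_prodMap' (ρ g) (σ g)

variable [CharZero k]

theorem finrank_eq_of_character_eq [Monoid G] {ρ : Representation k G V}
    {σ : Representation k G W} (h : ρ.character = σ.character) : finrank k V = finrank k W := by
  simpa using congrFun h 1

variable [Group G] [Finite G]

theorem exists_intertwiningMap_ne_zero_of_character_eq [Nontrivial V]
    {ρ : Representation k G V} {σ : Representation k G W} (h : ρ.character = σ.character) :
    ∃ f : IntertwiningMap ρ σ, f ≠ 0 := by
  have := Fintype.ofFinite G
  have : Invertible (Nat.card G : k) := invertibleOfNonzero (Nat.cast_ne_zero.2 Nat.card_pos.ne')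
  have hdim : finrank k (IntertwiningMap ρ σ) = finrank k (IntertwiningMap ρ ρ) := by
    rw [← Nat.cast_inj (R := k), ← card_inv_mul_sum_char_mul_char_eq_finrank,
      ← card_inv_mul_sum_char_mul_char_eq_finrank, h]
  have : Nontrivial (IntertwiningMap ρ ρ) := by
    obtain ⟨v, hv⟩ := exists_ne (0 : V)
    exact ⟨1, 0, fun hone ↦ hv (DFunLike.congr_fun hone v)⟩
  have : Nontrivial (IntertwiningMap ρ σ) :=
    nontrivial_of_finrank_pos (R := k) (hdim ▸ finrank_pos)
  exact exists_ne 0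

theorem nonempty_equiv_of_character_eq {ρ : Representation k G V} {σ : Representation k G W}
    (h : ρ.character = σ.character) : Nonempty (ρ.Equiv σ) := by
  induction hn : finrank k V using Nat.strong_induction_on generalizing V W with | _ n ih
  rcases subsingleton_or_nontrivial V with hV | hV
  · have : Subsingleton W := by
      rw [← finrank_zero_iff (R := k), ← finrank_eq_of_character_eq h,
        finrank_zero_of_subsingleton]
    exact ⟨.mk 0 fun g ↦ Subsingleton.elim _ _⟩
  obtain ⟨f, hf⟩ := exists_intertwiningMap_ne_zero_of_character_eq h
  -- Cancelling the common summand `f.range` leaves `f.ker` and `T` with equal characters.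
  obtain ⟨T, hT⟩ := exists_isCompl_toSubmodule σ f.range
  obtain ⟨eρ⟩ := nonempty_equiv_ker_prod_range f
  have eσ := repProdEquivOfIsCompl hT.symm
  have hker : f.ker.toRepresentation.character = T.toRepresentation.character := by
    rwa [char_iso eρ, ← char_iso eσ, character_prod, character_prod, add_left_inj] at h
  have hlt : finrank k f.ker.toSubmodule < n := by
    refine hn ▸ Submodule.finrank_lt fun htop ↦ hf ?_
    exact IntertwiningMap.toLinearMap_injective ρ σ (LinearMap.ker_eq_top.1 htop)
  obtain ⟨e⟩ := ih _ hlt hker rfl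
  exact ⟨eρ.trans ((repEquivProdCongr e (.refl _)).trans eσ)⟩

end Characters

end Representations

section MatrixRepresentations

variable {K m Γ : Type*} [Field K] [Fintype m] [DecidableEq m] [Group Γ] [Finite Γ]

theorem exists_isUnit_semiconjBy_of_trace_eq [CharZero K] {φ φ' : Γ →* Matrix m m K}
    (h : ∀ γ, (φ γ).trace = (φ' γ).trace) :
    ∃ a, IsUnit a ∧ ∀ γ, SemiconjBy a (φ γ) (φ' γ) := by
  let toRep (ψ : Γ →* Matrix m m K) : Representation K Γ (m → K) :=
    (toLinAlgEquiv' : Matrix m m K ≃ₐ[K] _).toMonoidHom.comp ψ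
  have hchar : (toRep φ).character = (toRep φ').character := by
    funext γ
    exact (trace_toLin'_eq _).trans ((h γ).trans (trace_toLin'_eq _).symm)
  obtain ⟨e⟩ := nonempty_equiv_of_character_eq hchar
  let f : Module.End K (m → K) := e.toLinearMap
  have hf : IsUnit f := (Module.End.isUnit_iff f).2 e.toLinearEquiv.bijective
  refine ⟨LinearMap.toMatrixAlgEquiv' f, hf.map _, fun γ ↦ ?_⟩
  have hfφ : SemiconjBy f (toRep φ γ) (toRep φ' γ) := e.isIntertwining' γ
  simpa [toRep] using hfφ.map (LinearMap.toMatrixAlgEquiv' : _ ≃ₐ[K] Matrix m m K)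

end MatrixRepresentations

section Adjoint

variable {R m : Type*} [CommRing R] [Fintype m] [DecidableEq m]

/-- The adjoint with respect to the bilinear form with matrix `J`, as a star operation on square
matrices. It makes the isometries of `J` the unitary elements. Not an instance, since it depends on
`J` and would compete with the conjugate transpose. -/
abbrev formStarRing (J : Matrix m m R) (hJ : IsUnit J) (hJT : Jᵀ = J ∨ Jᵀ = -J) :
    StarRing (Matrix m m R) where
  star X := J⁻¹ * Xᵀ * J
  star_involutive X := by
    have hdet := (isUnit_iff_isUnit_det J).1 hJ
    calc J⁻¹ * (J⁻¹ * Xᵀ * J)ᵀ * J = (J⁻¹ * Jᵀ) * X * (Jᵀ * J⁻¹)ᵀ := by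
          simp only [transpose_mul, transpose_transpose, Matrix.mul_assoc]
      _ = X := by
          rcases hJT with hT | hT <;>
            simp [hT, mul_nonsing_inv _ hdet, nonsing_inv_mul _ hdet, -transpose_mul]
  star_mul X Y := by
    have hdet := (isUnit_iff_isUnit_det J).1 hJ
    simp only [transpose_mul, Matrix.mul_assoc, mul_nonsing_inv_cancel_left _ _ hdet]
  star_add X Y := by rw [transpose_add, Matrix.mul_add, Matrix.add_mul]

theorem isUnit_of_transpose_mul_mul_eq {J g : Matrix m m R} (hJ : IsUnit J)
    (hg : gᵀ * J * g = J) : IsUnit g :=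
  isUnit_of_mul_isUnit_right (hg ▸ hJ)

theorem mem_unitary_formStarRing_iff {J : Matrix m m R} (hJ : IsUnit J)
    (hJT : Jᵀ = J ∨ Jᵀ = -J) {g : Matrix m m R} :
    letI := formStarRing J hJ hJT
    g ∈ unitary (Matrix m m R) ↔ gᵀ * J * g = J := by
  have hdet := (isUnit_iff_isUnit_det J).1 hJ
  let _ := formStarRing J hJ hJT
  have hstar_mul : J * (star g * g) = gᵀ * J * g := by
    change J * (J⁻¹ * gᵀ * J * g) = _
    simp only [Matrix.mul_assoc, mul_nonsing_inv_cancel_left _ _ hdet]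
  have hiff : star g * g = 1 ↔ gᵀ * J * g = J := by
    rw [← hstar_mul, hJ.mul_eq_left]
  refine ⟨fun hg ↦ hiff.1 (Unitary.star_mul_self_of_mem hg), fun hg ↦ ?_⟩
  exact ⟨hiff.2 hg, mul_eq_one_comm.1 (hiff.2 hg)⟩

theorem isSelfAdjoint_algebraMap_formStarRing {J : Matrix m m R} (hJ : IsUnit J)
    (hJT : Jᵀ = J ∨ Jᵀ = -J) (c : R) :
    letI := formStarRing J hJ hJT
    IsSelfAdjoint (algebraMap R (Matrix m m R) c) := by
  change J⁻¹ * (algebraMap R (Matrix m m R) c)ᵀ * J = _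
  rw [Algebra.algebraMap_eq_smul_one, transpose_smul, transpose_one, Matrix.mul_smul,
    Matrix.mul_one, Matrix.smul_mul, nonsing_inv_mul _ ((isUnit_iff_isUnit_det J).1 hJ)]

end Adjoint

theorem statement11_general {K m Γ : Type*} [Field K] [IsAlgClosed K] [CharZero K] [Fintype m]
    [DecidableEq m] [Group Γ] [Finite Γ] {J : Matrix m m K} (hJ : IsUnit J)
    (hJT : Jᵀ = J ∨ Jᵀ = -J) {φ φ' : Γ →* Matrix m m K} (hφ : ∀ γ, (φ γ)ᵀ * J * φ γ = J)
    (hφ' : ∀ γ, (φ' γ)ᵀ * J * φ' γ = J) (htr : ∀ γ, (φ γ).trace = (φ' γ).trace) :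
    ∃ g : Matrix m m K, gᵀ * J * g = J ∧ ∀ γ, φ' γ = g * φ γ * g⁻¹ := by
  obtain ⟨a, ha, haφ⟩ := exists_isUnit_semiconjBy_of_trace_eq htr
  let _ := formStarRing J hJ hJT
  obtain ⟨g, hg, hgφ⟩ := exists_unitary_semiconjBy (isSelfAdjoint_algebraMap_formStarRing hJ hJT) ha
  have hgJ : gᵀ * J * g = J := (mem_unitary_formStarRing_iff hJ hJT).1 hg
  have hg_unit : IsUnit g := isUnit_of_transpose_mul_mul_eq hJ hgJ
  refine ⟨g, hgJ, fun γ ↦ ?_⟩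
  have hgφγ : SemiconjBy g (φ γ) (φ' γ) := hgφ _ ((mem_unitary_formStarRing_iff hJ hJT).2 (hφ γ))
    _ ((mem_unitary_formStarRing_iff hJ hJT).2 (hφ' γ)) (haφ γ)
  rw [hgφγ.eq, mul_nonsing_inv_cancel_right _ _ ((isUnit_iff_isUnit_det g).1 hg_unit)]

theorem Jmat_eq_neg_J (n : ℕ) : Jmat n = -Matrix.J (Fin n) ℂ := by
  simp [Jmat, Matrix.J, fromBlocks_neg]

theorem isUnit_Jmat (n : ℕ) : IsUnit (Jmat n) :=
  Jmat_eq_neg_J n ▸ ((isUnit_iff_isUnit_det _).2 (isUnit_det_J (Fin n) ℂ)).neg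

theorem transpose_Jmat (n : ℕ) : (Jmat n)ᵀ = -Jmat n := by
  rw [Jmat_eq_neg_J, transpose_neg, J_transpose]

/-- For every `n ≥ 1`, the complex symplectic group `Sp_{2n}(ℂ)` is acceptable: any two
pointwise (locally) conjugate homomorphisms from a finite group into `Sp_{2n}(ℂ)` are
globally conjugate.  (Group homomorphisms into `Sp_{2n}(ℂ)` are encoded as monoid
homomorphisms into the multiplicative monoid of matrices landing in `Sp_{2n}(ℂ)`.) -/
theorem statement11 (n : ℕ) (hn : 1 ≤ n) (Γ : Type) [Group Γ] [Finite Γ]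
    (φ φ' : Γ →* Matrix (Fin n ⊕ Fin n) (Fin n ⊕ Fin n) ℂ)
    (hφ : ∀ γ, memSp n (φ γ)) (hφ' : ∀ γ, memSp n (φ' γ))
    (hloc : ∀ γ : Γ, ∃ g : Matrix (Fin n ⊕ Fin n) (Fin n ⊕ Fin n) ℂ,
      memSp n g ∧ φ' γ = g * φ γ * g⁻¹) :
    ∃ g : Matrix (Fin n ⊕ Fin n) (Fin n ⊕ Fin n) ℂ,
      memSp n g ∧ ∀ γ : Γ, φ' γ = g * φ γ * g⁻¹ := by
  refine statement11_general (isUnit_Jmat n) (.inr (transpose_Jmat n)) hφ hφ' fun γ ↦ ?_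
  obtain ⟨g, hg, hconj⟩ := hloc γ
  rw [hconj, trace_conj (isUnit_of_transpose_mul_mul_eq (isUnit_Jmat n) hg)]

end
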